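/- Let n ≥ 3, σ > 0, ρ ∈ (−1/n, 1), and let Z ~ N(μ, σ²Ξ) be an n-dimensional Gaussian random vector, where Ξ is the n×n matrix with diagonal entries 1 and all off-diagonal entries ρ, and suppose Pμ ≠ 0. Then for every λ ∈ [0, ∞), the problem max over θ ∈ S^{n−1} ∩ ⟨𝟙⟩^⊥ of E[T_{χ(Z)}(θ)] − λ·Var(T_{χ(Z)}(θ)) is solved by θ* = χ(μ), independently of λ, and the maximum value equals ϱ_{n−1}(‖Pμ‖/(σ√(1−ρ))) − λ·f_{n−1}(‖Pμ‖/(σ√(1−ρ))). -/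

import Mathlib

open MeasureTheory ProbabilityTheory Matrix

noncomputable section

def euclNorm {n : ℕ} (x : Fin n → ℝ) : ℝ := Real.sqrt (∑ i, x i ^ 2)

def centerMat (n : ℕ) : Matrix (Fin n) (Fin n) ℝ :=
  1 - (n : ℝ)⁻¹ • Matrix.of (fun _ _ => (1 : ℝ))

def chi {n : ℕ} (z : Fin n → ℝ) : Fin n → ℝ :=
  (euclNorm ((centerMat n).mulVec z))⁻¹ • (centerMat n).mulVec z

def meanVec {Ω : Type*} [MeasurableSpace Ω] (P : Measure Ω) {n : ℕ}
    (X : Ω → Fin n → ℝ) : Fin n → ℝ := fun i => ∫ ω, X ω i ∂P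

def covMatrix {Ω : Type*} [MeasurableSpace Ω] (P : Measure Ω) {n : ℕ}
    (X : Ω → Fin n → ℝ) : Matrix (Fin n) (Fin n) ℝ :=
  Matrix.of fun i j => ∫ ω, (X ω i - meanVec P X i) * (X ω j - meanVec P X j) ∂P

def MRL {Ω : Type*} [MeasurableSpace Ω] (P : Measure Ω) {n : ℕ}
    (X : Ω → Fin n → ℝ) : ℝ := euclNorm (meanVec P X)

def MD {Ω : Type*} [MeasurableSpace Ω] (P : Measure Ω) {n : ℕ}
    (X : Ω → Fin n → ℝ) : Fin n → ℝ := (euclNorm (meanVec P X))⁻¹ • meanVec P X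

def stdGaussianPi (n : ℕ) : Measure (Fin n → ℝ) :=
  Measure.pi fun _ => gaussianReal 0 1

def IsGaussianVec {Ω : Type*} [MeasurableSpace Ω] (P : Measure Ω) {n : ℕ}
    (Z : Ω → Fin n → ℝ) (m : Fin n → ℝ) (S : Matrix (Fin n) (Fin n) ℝ) : Prop :=
  ∃ A : Matrix (Fin n) (Fin n) ℝ, A * Aᵀ = S ∧
    Measure.map Z P = Measure.map (fun x => m + A.mulVec x) (stdGaussianPi n)

def ascFact (a : ℝ) (k : ℕ) : ℝ := ∏ i ∈ Finset.range k, (a + i)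

def kummerM (a b z : ℝ) : ℝ := ∑' k : ℕ, (ascFact a k / ascFact b k) * z ^ k / (Nat.factorial k)

def varrho (m : ℕ) (x : ℝ) : ℝ :=
  (Real.Gamma (((m : ℝ) + 1) / 2) / (Real.sqrt 2 * Real.Gamma (((m : ℝ) + 2) / 2))) * x *
    kummerM (1 / 2) (((m : ℝ) + 2) / 2) (-x ^ 2 / 2)

def fFun (m : ℕ) (x : ℝ) : ℝ :=
  1 - (((m : ℝ) - 1) / m) * kummerM 1 ((m : ℝ) / 2 + 1) (-x ^ 2 / 2) - (varrho m x) ^ 2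

def gFun (m : ℕ) (x : ℝ) : ℝ :=
  (1 / (m : ℝ)) * kummerM 1 ((m : ℝ) / 2 + 1) (-x ^ 2 / 2)

def Vmat (n : ℕ) : Matrix (Fin n) (Fin n) ℝ :=
  Matrix.of fun i j =>
    if (j : ℕ) = n - 1 then 1 / Real.sqrt n
    else if (i : ℕ) = (j : ℕ) then
      ((n : ℝ) - 1 - (j : ℕ)) / Real.sqrt (((n : ℝ) - 1 - (j : ℕ)) * ((n : ℝ) - (j : ℕ)))
    else if (j : ℕ) < (i : ℕ) then
      -(1 / Real.sqrt (((n : ℝ) - 1 - (j : ℕ)) * ((n : ℝ) - (j : ℕ))))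
    else 0

def projMat (n : ℕ) : Matrix (Fin n) (Fin n) ℝ :=
  Matrix.diagonal fun i => if (i : ℕ) < n - 1 then 1 else 0

def embedZero {n : ℕ} (v : Fin (n - 1) → ℝ) : Fin n → ℝ :=
  fun i => if h : (i : ℕ) < n - 1 then v ⟨i, h⟩ else 0

def Ximat (n : ℕ) (r : ℝ) : Matrix (Fin n) (Fin n) ℝ :=
  Matrix.of fun i j => if i = j then 1 else r

def stdNormCDF (x : ℝ) : ℝ := (gaussianReal 0 1 (Set.Iic x)).toReal

def thetaTilde : Fin 2 → ℝ := ![Real.sqrt 2 / 2, -(Real.sqrt 2 / 2)]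


lemma betaInt_integrable {a c : ℝ} (ha : 0 < a) (hc : 0 < c) :
    IntegrableOn (fun u : ℝ => u ^ (a - 1) * (1 - u) ^ (c - 1)) (Set.Ioo 0 1) := by
  have h := (Complex.betaIntegral_convergent (u := a) (v := c) (by simpa) (by simpa))
  rw [intervalIntegrable_iff_integrableOn_Ioc_of_le (by simp)] at h
  have h2 := (h.mono_set Set.Ioo_subset_Ioc_self).re
  refine IntegrableOn.congr_fun (f := fun u : ℝ => RCLike.re (((u : ℂ)) ^ ((a : ℂ) - 1) * (1 - (u : ℂ)) ^ ((c : ℂ) - 1))) h2 ?_ measurableSet_Ioo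
  intro u hu
  have h1 : (0 : ℝ) ≤ u := hu.1.le
  have h3 : (0 : ℝ) ≤ 1 - u := by linarith [hu.2]
  simp only
  norm_cast
  rw [← Complex.ofReal_cpow h1, ← Complex.ofReal_cpow h3, RCLike.re_to_complex,
        Complex.re_mul_ofReal, Complex.ofReal_re]

lemma betaInt_eq {a c : ℝ} (ha : 0 < a) (hc : 0 < c) :
    ∫ u in Set.Ioo (0 : ℝ) 1, u ^ (a - 1) * (1 - u) ^ (c - 1) =
      Real.Gamma a * Real.Gamma c / Real.Gamma (a + c) := by
  have h0 := beta_eq_betaIntegralReal a c ha hc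
  rw [beta] at h0
  rw [h0, Complex.betaIntegral, intervalIntegral.integral_of_le (by norm_num),
      ← integral_Ioc_eq_integral_Ioo, ← RCLike.re_to_complex, ← integral_re]
  · refine setIntegral_congr_fun measurableSet_Ioc fun x ⟨hx1, hx₂⟩ ↦ ?_
    norm_cast
    rw [← Complex.ofReal_cpow, ← Complex.ofReal_cpow, RCLike.re_to_complex,
        Complex.re_mul_ofReal, Complex.ofReal_re]
    all_goals linarith
  have h := (Complex.betaIntegral_convergent (u := a) (v := c) (by simpa) (by simpa))
  rwa [intervalIntegrable_iff_integrableOn_Ioc_of_le (by simp)] at h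

lemma ascFact_pos {a : ℝ} (ha : 0 < a) (k : ℕ) : 0 < ascFact a k := by
  unfold ascFact
  exact Finset.prod_pos fun i _ => by positivity

lemma ascFact_le {a b : ℝ} (ha : 0 < a) (hab : a ≤ b) (k : ℕ) : ascFact a k ≤ ascFact b k := by
  unfold ascFact
  exact Finset.prod_le_prod (fun i _ => by positivity) (fun i _ => by linarith)

lemma Gamma_add_nat {a : ℝ} (ha : 0 < a) (k : ℕ) :
    Real.Gamma (a + k) = ascFact a k * Real.Gamma a := by
  induction k with
  | zero => simp [ascFact]
  | succ k ih =>
    have : a + ((k + 1 : ℕ) : ℝ) = (a + k) + 1 := by push_cast; ring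
    rw [this, Real.Gamma_add_one (by positivity), ih, ascFact, ascFact, Finset.prod_range_succ]
    ring

lemma kummer_summable {a b : ℝ} (ha : 0 < a) (hab : a ≤ b) (z : ℝ) :
    Summable fun k : ℕ => ‖(ascFact a k / ascFact b k) * z ^ k / (Nat.factorial k)‖ := by
  refine Summable.of_nonneg_of_le (fun _ => norm_nonneg _) (fun k => ?_)
    (Real.summable_pow_div_factorial |z|)
  have hb := ascFact_pos (ha.trans_le hab) k
  have ha' := ascFact_pos ha k
  rw [norm_div, norm_mul, norm_pow, Real.norm_eq_abs, Real.norm_eq_abs, Real.norm_eq_abs,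
    abs_of_pos (div_pos ha' hb), abs_of_nonneg (by positivity : (0:ℝ) ≤ (Nat.factorial k))]
  gcongr
  exact mul_le_of_le_one_left (by positivity) ((div_le_one hb).2 (ascFact_le ha hab k))

lemma beta_ratio {a b : ℝ} (ha : 0 < a) (hab : a < b) (k : ℕ) :
    ∫ u in Set.Ioo (0 : ℝ) 1, u ^ (a + k - 1) * (1 - u) ^ (b - a - 1) =
      Real.Gamma a * Real.Gamma (b - a) / Real.Gamma b * (ascFact a k / ascFact b k) := by
  have hb : 0 < b := ha.trans hab
  rw [betaInt_eq (by positivity) (sub_pos.2 hab), show a + k + (b - a) = b + k by ring,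
    Gamma_add_nat ha, Gamma_add_nat hb]
  have h1 := (Real.Gamma_pos_of_pos hb).ne'
  have h2 := (ascFact_pos hb k).ne'
  field_simp

lemma kummer_int {a b : ℝ} (ha : 0 < a) (hab : a < b) (z : ℝ) :
    ∫ u in Set.Ioo (0 : ℝ) 1, u ^ (a - 1) * (1 - u) ^ (b - a - 1) * Real.exp (z * u) =
      Real.Gamma a * Real.Gamma (b - a) / Real.Gamma b * kummerM a b z := by
  have hb : 0 < b := ha.trans hab
  set F : ℕ → ℝ → ℝ := fun k u =>
    (z ^ k / (Nat.factorial k)) * (u ^ (a + k - 1) * (1 - u) ^ (b - a - 1)) with hF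
  have hintg : ∀ k, Integrable (F k) (volume.restrict (Set.Ioo (0:ℝ) 1)) := fun k =>
    (betaInt_integrable (a := a + k) (c := b - a) (by positivity) (sub_pos.2 hab)).const_mul _
  have hval : ∀ (w : ℝ) (k : ℕ), ∫ u in Set.Ioo (0 : ℝ) 1,
      (w ^ k / (Nat.factorial k)) * (u ^ (a + k - 1) * (1 - u) ^ (b - a - 1)) =
      Real.Gamma a * Real.Gamma (b - a) / Real.Gamma b *
        ((ascFact a k / ascFact b k) * w ^ k / (Nat.factorial k)) := by
    intro w k
    rw [integral_const_mul, beta_ratio ha hab]; ring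
  have hnorm : ∀ k, ∫ u in Set.Ioo (0 : ℝ) 1, ‖F k u‖ =
      Real.Gamma a * Real.Gamma (b - a) / Real.Gamma b *
        ((ascFact a k / ascFact b k) * |z| ^ k / (Nat.factorial k)) := by
    intro k
    rw [← hval]
    refine setIntegral_congr_fun measurableSet_Ioo fun u hu => ?_
    have h1 : 0 ≤ u ^ (a + k - 1) := Real.rpow_nonneg hu.1.le _
    have h2 : 0 ≤ (1 - u) ^ (b - a - 1) := Real.rpow_nonneg (by linarith [hu.2]) _
    simp only [hF, norm_mul, norm_div, norm_pow, Real.norm_eq_abs, abs_of_nonneg h1,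
      abs_of_nonneg h2, Nat.abs_cast]
  have hs := hasSum_integral_of_summable_integral_norm hintg (by
    simp_rw [hnorm]
    exact ((kummer_summable ha hab.le |z|).of_norm).mul_left _)
  rw [kummerM, ← tsum_mul_left]
  simp_rw [← hval]
  rw [show (∑' k : ℕ, ∫ u in Set.Ioo (0 : ℝ) 1,
      (z ^ k / (Nat.factorial k)) * (u ^ (a + k - 1) * (1 - u) ^ (b - a - 1))) = _ from hs.tsum_eq]
  refine setIntegral_congr_fun measurableSet_Ioo fun u hu => ?_
  have : ∀ k, F k u = (u ^ (a - 1) * (1 - u) ^ (b - a - 1)) * ((z * u) ^ k / (Nat.factorial k)) := by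
    intro k
    simp only [hF]
    rw [show a + k - 1 = (a - 1) + k by ring, Real.rpow_add hu.1, Real.rpow_natCast, mul_pow]
    ring
  simp_rw [this]
  rw [tsum_mul_left, Real.exp_eq_exp_ℝ, NormedSpace.exp_eq_tsum_div]

lemma integral_reflect (g : ℝ → ℝ) :
    ∫ u in Set.Ioo (0 : ℝ) 1, g u = ∫ u in Set.Ioo (0 : ℝ) 1, g (1 - u) := by
  rw [← integral_Ioc_eq_integral_Ioo, ← integral_Ioc_eq_integral_Ioo,
    ← intervalIntegral.integral_of_le zero_le_one, ← intervalIntegral.integral_of_le zero_le_one,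
    intervalIntegral.integral_comp_sub_left (fun x => g x) 1]
  simp

lemma kummer_transform {a b : ℝ} (ha : 0 < a) (hab : a < b) (z : ℝ) :
    kummerM a b (-z) = Real.exp (-z) * kummerM (b - a) b z := by
  have hb : 0 < b := ha.trans hab
  have h1 := kummer_int ha hab (-z)
  have h2 := kummer_int (a := b - a) (b := b) (sub_pos.2 hab) (by linarith) z
  have h3 := Real.Gamma_pos_of_pos ha
  have h4 := Real.Gamma_pos_of_pos hb
  have h5 := Real.Gamma_pos_of_pos (sub_pos.2 hab)
  rw [integral_reflect] at h1
  rw [show b - (b - a) = a by ring] at h2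
  have h6 : ∫ u in Set.Ioo (0 : ℝ) 1,
      (1 - u) ^ (a - 1) * (1 - (1 - u)) ^ (b - a - 1) * Real.exp (-z * (1 - u)) =
      Real.exp (-z) * ∫ u in Set.Ioo (0 : ℝ) 1,
        u ^ (b - a - 1) * (1 - u) ^ (a - 1) * Real.exp (z * u) := by
    rw [← integral_const_mul]
    refine integral_congr_ae (Filter.Eventually.of_forall fun u => ?_)
    simp only
    rw [show -z * (1 - u) = -z + z * u by ring, Real.exp_add, show 1 - (1 - u) = u by ring]
    ring
  rw [h6, h2] at h1
  have h7 : (Real.Gamma a * Real.Gamma (b - a) / Real.Gamma b) ≠ 0 := by positivity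
  apply mul_left_cancel₀ h7
  rw [← h1]; ring

lemma binom_sum_le {b : ℝ} (hb : 1 < b) (N : ℕ) :
    (∑ k ∈ Finset.range (N + 1), (N.choose k : ℝ) / (b + k)) * (2 * b + N - 1) ≤ 2 ^ (N + 1) := by
  have hpow : ∑ k ∈ Finset.range (N + 1), (N.choose k : ℝ) = 2 ^ N := by
    exact_mod_cast Nat.sum_range_choose N
  -- shift identity
  have hshift : ∑ k ∈ Finset.range (N + 1), (N.choose k : ℝ) * k / (b - 1 + k) =
      ∑ k ∈ Finset.range (N + 1), (N.choose k : ℝ) * (N - k) / (b + k) := by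
    rw [Finset.sum_range_succ' (fun k : ℕ => (N.choose k : ℝ) * k / (b - 1 + k)),
      Finset.sum_range_succ (fun k : ℕ => (N.choose k : ℝ) * (N - k) / (b + k))]
    simp only [Nat.cast_zero, mul_zero, zero_div, add_zero, sub_self]
    refine Finset.sum_congr rfl fun k hk => ?_
    have hk' : k ≤ N := (Finset.mem_range.1 hk).le
    have := Nat.choose_succ_right_eq N k
    have h2 : (N.choose (k + 1) : ℝ) * ((k + 1 : ℕ) : ℝ) = N.choose k * ((N : ℝ) - k) := by
      rw [← Nat.cast_sub hk']; exact_mod_cast this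
    rw [h2]; push_cast; congr 1; ring
  have hmono : ∑ k ∈ Finset.range (N + 1), (N.choose k : ℝ) * ((b - 1) / (b + k)) ≤
      ∑ k ∈ Finset.range (N + 1), (N.choose k : ℝ) * ((b - 1) / (b - 1 + k)) := by
    refine Finset.sum_le_sum fun k _ => ?_
    have : (0 : ℝ) < b - 1 + k := by have : (0 : ℝ) ≤ k := by positivity
                                     linarith
    have h0 : 0 ≤ b - 1 := by linarith
    gcongr
    linarith
  have h3 : ∑ k ∈ Finset.range (N + 1), (N.choose k : ℝ) * ((b - 1) / (b - 1 + k)) =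
      2 ^ N - ∑ k ∈ Finset.range (N + 1), (N.choose k : ℝ) * k / (b - 1 + k) := by
    rw [← hpow, ← Finset.sum_sub_distrib]
    refine Finset.sum_congr rfl fun k _ => ?_
    have : (0 : ℝ) < b - 1 + k := by have : (0 : ℝ) ≤ k := by positivity
                                     linarith
    field_simp
    ring
  have h4 : (∑ k ∈ Finset.range (N + 1), (N.choose k : ℝ) / (b + k)) * (2 * b + N - 1) =
      (∑ k ∈ Finset.range (N + 1), (N.choose k : ℝ) * ((b - 1) / (b + k))) +
      (∑ k ∈ Finset.range (N + 1), (N.choose k : ℝ) * (N - k) / (b + k)) + 2 ^ N := by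
    rw [← hpow, Finset.sum_mul, ← Finset.sum_add_distrib, ← Finset.sum_add_distrib]
    refine Finset.sum_congr rfl fun k _ => ?_
    have : (0 : ℝ) < b + k := by positivity
    field_simp
    ring
  rw [h4, pow_succ]
  linarith

lemma gamma_ratio {c : ℝ} (hc : 0 < c) :
    1 ≤ (Real.Gamma c / Real.Gamma (c + 1 / 2)) ^ 2 * c := by
  have h1 := Real.Gamma_mul_add_mul_le_rpow_Gamma_mul_rpow_Gamma hc (by linarith : 0 < c + 1)
    (by norm_num : (0:ℝ) < 1/2) (by norm_num : (0:ℝ) < 1/2) (by norm_num)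
  rw [show 1 / 2 * c + 1 / 2 * (c + 1) = c + 1 / 2 by ring, Real.Gamma_add_one hc.ne',
    ← Real.sqrt_eq_rpow, ← Real.sqrt_eq_rpow] at h1
  have hg := Real.Gamma_pos_of_pos hc
  have hg2 := Real.Gamma_pos_of_pos (by linarith : 0 < c + 1 / 2)
  rw [← Real.sqrt_mul hg.le] at h1
  have h2 : Real.Gamma (c + 1 / 2) ^ 2 ≤ Real.Gamma c * (c * Real.Gamma c) := by
    have := pow_le_pow_left₀ hg2.le h1 2
    rwa [Real.sq_sqrt (by positivity)] at this
  rw [div_pow, div_mul_eq_mul_div, one_le_div (by positivity)]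
  linarith

lemma coeff_ge {b : ℝ} (hb : 1 < b) (k l : ℕ) :
    2 / (2 * b + (k + l) - 1) ≤
      (Real.Gamma (b - 1 / 2) / Real.Gamma b) ^ 2 *
      ((ascFact (b - 1 / 2) k / ascFact b k) * (ascFact (b - 1 / 2) l / ascFact b l)) := by
  have hq : ∀ k : ℕ, ∃ q : ℝ, 0 < q ∧ q = (Real.Gamma (b - 1 / 2) / Real.Gamma b) *
      (ascFact (b - 1 / 2) k / ascFact b k) ∧ 1 ≤ q ^ 2 * (b - 1 / 2 + k) := by
    intro k
    have hk : (0 : ℝ) ≤ k := by positivity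
    have h := gamma_ratio (c := b - 1 / 2 + k) (by linarith)
    rw [show b - 1 / 2 + k + 1 / 2 = b + (k:ℝ) by ring, Gamma_add_nat (by linarith),
      Gamma_add_nat (by linarith)] at h
    have g1 := Real.Gamma_pos_of_pos (by linarith : 0 < b - 1 / 2)
    have g2 := Real.Gamma_pos_of_pos (by linarith : 0 < b)
    have a1 := ascFact_pos (by linarith : 0 < b - 1 / 2) k
    have a2 := ascFact_pos (by linarith : 0 < b) k
    refine ⟨_, by positivity, rfl, ?_⟩
    convert h using 3
    field_simp
  obtain ⟨p, hp, hp', hp2⟩ := hq k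
  obtain ⟨q, hq, hq', hq2⟩ := hq l
  have : (Real.Gamma (b - 1 / 2) / Real.Gamma b) ^ 2 *
      ((ascFact (b - 1 / 2) k / ascFact b k) * (ascFact (b - 1 / 2) l / ascFact b l)) = p * q := by
    rw [hp', hq']; ring
  rw [this]
  have hk : (0 : ℝ) ≤ k := by positivity
  have hl : (0 : ℝ) ≤ l := by positivity
  have hD : 0 < 2 * b + (k + l) - 1 := by linarith
  rw [div_le_iff₀ hD]
  have hpq := mul_le_mul hp2 hq2 zero_le_one (by linarith)
  have hamgm : 4 * ((b - 1 / 2 + k) * (b - 1 / 2 + l)) ≤ (2 * b + (k + l) - 1) ^ 2 := by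
    nlinarith [sq_nonneg ((k : ℝ) - l)]
  have h4 : (2:ℝ) ^ 2 ≤ (p * q * (2 * b + (k + l) - 1)) ^ 2 := by
    have : (p * q) ^ 2 * (4 * ((b - 1 / 2 + k) * (b - 1 / 2 + l))) ≤
      (p * q) ^ 2 * (2 * b + (k + l) - 1) ^ 2 := by gcongr
    nlinarith
  exact le_of_sq_le_sq h4 (by positivity)

lemma kummer_prod_ineq {b : ℝ} (hb : 1 < b) {z : ℝ} (hz : 0 ≤ z) :
    Real.exp z * kummerM b (b + 1) z ≤
      b * (Real.Gamma (b - 1 / 2) / Real.Gamma b) ^ 2 * kummerM (b - 1 / 2) b z ^ 2 := by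
  have hb0 : 0 < b := by linarith
  have s1 := kummer_summable (a := b) (b := b + 1) hb0 (by linarith) z
  have s2 := kummer_summable (a := b - 1 / 2) (b := b) (by linarith) (by linarith) z
  have s3 : Summable fun k : ℕ => ‖z ^ k / (Nat.factorial k : ℝ)‖ := by
    simpa using (Real.summable_pow_div_factorial z).norm
  have e : Real.exp z = ∑' k : ℕ, z ^ k / (Nat.factorial k : ℝ) := by
    rw [Real.exp_eq_exp_ℝ, NormedSpace.exp_eq_tsum_div]
  rw [e, mul_comm, kummerM, tsum_mul_tsum_eq_tsum_sum_range_of_summable_norm s1 s3, sq (kummerM _ _ _), kummerM,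
    tsum_mul_tsum_eq_tsum_sum_range_of_summable_norm s2 s2, ← tsum_mul_left]
  refine Summable.tsum_le_tsum (fun N => ?_)
    (summable_norm_sum_mul_range_of_summable_norm s1 s3).of_norm
    ((summable_norm_sum_mul_range_of_summable_norm s2 s2).of_norm.mul_left _)
  have hr : ∀ k : ℕ, ascFact b k / ascFact (b + 1) k = b / (b + k) := by
    intro k
    have h1 := ascFact_pos (by linarith : 0 < b + 1) k
    have h2 : (b + k) * ascFact b k = b * ascFact (b + 1) k := by
      have e1 : ascFact b (k + 1) = ascFact b k * (b + k) := by
        rw [ascFact, ascFact, Finset.prod_range_succ]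
      have e2 : ascFact b (k + 1) = ascFact (b + 1) k * b := by
        rw [ascFact, ascFact, Finset.prod_range_succ']
        simp only [Nat.cast_add, Nat.cast_one, Nat.cast_zero, add_zero]
        congr 1
        exact Finset.prod_congr rfl fun i _ => by ring
      linarith
    rw [div_eq_div_iff h1.ne' (by positivity)]; linarith
  have hch : ∀ k ∈ Finset.range (N + 1), ∀ c d : ℝ,
      c * z ^ k / (Nat.factorial k) * (d * z ^ (N - k) / (Nat.factorial (N - k))) =
      (z ^ N / (Nat.factorial N)) * ((N.choose k : ℝ) * (c * d)) := by
    intro k hk c d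
    have hk' : k ≤ N := Nat.lt_succ_iff.1 (Finset.mem_range.1 hk)
    have h := Nat.choose_mul_factorial_mul_factorial hk'
    have h' : (N.choose k : ℝ) * (Nat.factorial k) * (Nat.factorial (N - k)) = Nat.factorial N := by
      exact_mod_cast h
    have hz' : z ^ N = z ^ k * z ^ (N - k) := by rw [← pow_add]; congr 1; omega
    have f1 : (Nat.factorial k : ℝ) ≠ 0 := by positivity
    have f2 : (Nat.factorial (N - k) : ℝ) ≠ 0 := by positivity
    have f3 : (N.choose k : ℝ) ≠ 0 := by
      have := Nat.choose_pos hk'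
      positivity
    rw [← h', hz']
    field_simp
  have hL : ∑ k ∈ Finset.range (N + 1), ascFact b k / ascFact (b + 1) k * z ^ k / (Nat.factorial k) *
      (z ^ (N - k) / (Nat.factorial (N - k))) = (z ^ N / (Nat.factorial N)) *
        (b * ∑ k ∈ Finset.range (N + 1), (N.choose k : ℝ) / (b + k)) := by
    rw [Finset.mul_sum, Finset.mul_sum]
    refine Finset.sum_congr rfl fun k hk => ?_
    have := hch k hk (b / (b + k)) 1
    rw [one_mul, mul_one] at this
    rw [hr, this]
    ring
  have hR : b * (Real.Gamma (b - 1 / 2) / Real.Gamma b) ^ 2 * ∑ k ∈ Finset.range (N + 1),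
      ascFact (b - 1 / 2) k / ascFact b k * z ^ k / (Nat.factorial k) *
      (ascFact (b - 1 / 2) (N - k) / ascFact b (N - k) * z ^ (N - k) / (Nat.factorial (N - k))) =
      (z ^ N / (Nat.factorial N)) * (b * ∑ k ∈ Finset.range (N + 1), (N.choose k : ℝ) *
      ((Real.Gamma (b - 1 / 2) / Real.Gamma b) ^ 2 * (ascFact (b - 1 / 2) k / ascFact b k *
        (ascFact (b - 1 / 2) (N - k) / ascFact b (N - k))))) := by
    rw [Finset.mul_sum, Finset.mul_sum, Finset.mul_sum]
    refine Finset.sum_congr rfl fun k hk => ?_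
    rw [hch k hk]; ring
  rw [hL, hR]
  refine mul_le_mul_of_nonneg_left (mul_le_mul_of_nonneg_left ?_ hb0.le) (by positivity)
  have hN : (0 : ℝ) ≤ N := by positivity
  have hD : 0 < 2 * b + N - 1 := by linarith
  have hpow : ∑ k ∈ Finset.range (N + 1), (N.choose k : ℝ) = 2 ^ N := by
    exact_mod_cast Nat.sum_range_choose N
  calc _ ≤ 2 ^ (N + 1) / (2 * b + N - 1) := by
        rw [le_div_iff₀ hD]; exact binom_sum_le hb N
    _ = ∑ k ∈ Finset.range (N + 1), (N.choose k : ℝ) * (2 / (2 * b + N - 1)) := by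
        rw [← Finset.sum_mul, hpow, pow_succ]; ring
    _ ≤ _ := by
        refine Finset.sum_le_sum fun k hk => ?_
        have hk' : k ≤ N := Nat.lt_succ_iff.1 (Finset.mem_range.1 hk)
        have h := coeff_ge hb k (N - k)
        rw [Nat.cast_sub hk', show (k : ℝ) + (N - k) = N by ring] at h
        gcongr

lemma ascFact_one (k : ℕ) : ascFact 1 k = Nat.factorial k := by
  induction k with
  | zero => simp [ascFact]
  | succ k ih =>
    rw [ascFact, Finset.prod_range_succ, ← ascFact, ih, Nat.factorial_succ]; push_cast; ring

lemma kummer_one_sub {b : ℝ} (hb : 1 < b) (z : ℝ) :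
    1 - kummerM 1 b (-z) = z / b * kummerM 1 (b + 1) (-z) := by
  have s := (kummer_summable (a := 1) (b := b) one_pos hb.le (-z)).of_norm
  rw [kummerM, s.tsum_eq_zero_add, kummerM, ← tsum_mul_left]
  have h0 : ascFact 1 0 / ascFact b 0 * (-z) ^ 0 / (Nat.factorial 0 : ℝ) = 1 := by simp [ascFact]
  rw [h0, sub_add_cancel_left, ← tsum_neg]
  refine tsum_congr fun k => ?_
  have e2 : ascFact b (k + 1) = ascFact (b + 1) k * b := by
    rw [ascFact, ascFact, Finset.prod_range_succ']
    simp only [Nat.cast_add, Nat.cast_one, Nat.cast_zero, add_zero]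
    congr 1
    exact Finset.prod_congr rfl fun i _ => by ring
  have h1 := ascFact_pos (by linarith : 0 < b + 1) k
  rw [e2, ascFact_one, ascFact_one]
  have f1 : (Nat.factorial k : ℝ) ≠ 0 := by positivity
  have f2 : (Nat.factorial (k + 1) : ℝ) ≠ 0 := by positivity
  have : b ≠ 0 := by linarith
  field_simp
  ring

lemma kummer_ineq {b : ℝ} (hb : 1 < b) {z : ℝ} (hz : 0 ≤ z) :
    1 - kummerM 1 b (-z) ≤
      (Real.Gamma (b - 1 / 2) / Real.Gamma b) ^ 2 * z * kummerM (1 / 2) b (-z) ^ 2 := by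
  have hb0 : 0 < b := by linarith
  rw [kummer_one_sub hb, kummer_transform one_pos (by linarith : (1:ℝ) < b + 1),
    kummer_transform (by norm_num : (0:ℝ) < 1 / 2) (by linarith : 1 / 2 < b),
    show b + 1 - 1 = b by ring]
  have h := kummer_prod_ineq hb hz
  have h2 : z / b * Real.exp (-z) ^ 2 * (Real.exp z * kummerM b (b + 1) z) ≤
    z / b * Real.exp (-z) ^ 2 * (b * (Real.Gamma (b - 1 / 2) / Real.Gamma b) ^ 2 *
      kummerM (b - 1 / 2) b z ^ 2) := by gcongr
  have h3 : Real.exp (-z) * Real.exp z = 1 := by rw [← Real.exp_add]; simp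
  calc _ = z / b * Real.exp (-z) * (Real.exp (-z) * Real.exp z) * kummerM b (b + 1) z := by
          rw [h3]; ring
    _ = z / b * Real.exp (-z) ^ 2 * (Real.exp z * kummerM b (b + 1) z) := by ring
    _ ≤ _ := h2
    _ = _ := by field_simp

lemma kummer_nonneg {a b : ℝ} (ha : 0 < a) (hab : a < b) {z : ℝ} (hz : 0 ≤ z) :
    0 ≤ kummerM a b (-z) := by
  rw [kummer_transform ha hab]
  refine mul_nonneg (Real.exp_pos _).le (tsum_nonneg fun k => ?_)
  have := ascFact_pos (by linarith : 0 < b - a) k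
  have := ascFact_pos (by linarith : 0 < b) k
  positivity

/-- the key inequality `f ≤ g`. -/
lemma varrho_ineq {m : ℕ} (hm : 1 ≤ m) {x : ℝ} :
    1 - kummerM 1 ((m : ℝ) / 2 + 1) (-x ^ 2 / 2) ≤ varrho m x ^ 2 := by
  have hm' : (1 : ℝ) ≤ m := by exact_mod_cast hm
  have h := kummer_ineq (b := (m : ℝ) / 2 + 1) (by linarith) (z := x ^ 2 / 2) (by positivity)
  rw [show -x ^ 2 / 2 = -(x ^ 2 / 2) by ring]
  refine h.trans (le_of_eq ?_)
  rw [varrho, show ((m : ℝ) + 2) / 2 = m / 2 + 1 by ring, show -x ^ 2 / 2 = -(x ^ 2 / 2) by ring,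
    show (m : ℝ) / 2 + 1 - 1 / 2 = (m + 1) / 2 by ring]
  have : Real.sqrt 2 ^ 2 = 2 := Real.sq_sqrt (by norm_num)
  rw [mul_pow, mul_pow, div_pow, div_pow, mul_pow, this]
  field_simp

lemma varrho_nonneg {m : ℕ} {x : ℝ} (hx : 0 ≤ x) : 0 ≤ varrho m x := by
  rw [varrho, show -x ^ 2 / 2 = -(x ^ 2 / 2) by ring]
  have hm' : (0 : ℝ) ≤ m := by positivity
  have h1 := Real.Gamma_pos_of_pos (by linarith : 0 < ((m : ℝ) + 1) / 2)
  have h2 := Real.Gamma_pos_of_pos (by linarith : 0 < ((m : ℝ) + 2) / 2)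
  have h3 := kummer_nonneg (a := 1 / 2) (b := ((m : ℝ) + 2) / 2) (by norm_num) (by linarith)
    (z := x ^ 2 / 2) (by positivity)
  positivity

lemma gauss_tilt (f : ℝ → ℝ) (a : ℝ) {t : ℝ} (ht : 0 < t) :
    ∫ y, f y * Real.exp (-(t * y ^ 2)) ∂(gaussianReal a 1) =
      ((Real.sqrt (1 + 2 * t))⁻¹ * Real.exp (-(t * a ^ 2 / (1 + 2 * t)))) *
        ∫ y, f y ∂(gaussianReal (a / (1 + 2 * t)) (Real.toNNReal (1 + 2 * t)⁻¹)) := by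
  have hw : 0 < 1 + 2 * t := by linarith
  have hv : Real.toNNReal (1 + 2 * t)⁻¹ ≠ 0 := by
    simpa using hw
  rw [integral_gaussianReal_eq_integral_smul one_ne_zero,
    integral_gaussianReal_eq_integral_smul hv, ← integral_const_mul]
  refine integral_congr_ae (Filter.Eventually.of_forall fun y => ?_)
  simp only [gaussianPDFReal, smul_eq_mul, Real.coe_toNNReal _ (inv_pos.2 hw).le, NNReal.coe_one,
    mul_one]
  have h1 : Real.sqrt (2 * Real.pi * (1 + 2 * t)⁻¹) =
      Real.sqrt (2 * Real.pi) * (Real.sqrt (1 + 2 * t))⁻¹ := by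
    rw [Real.sqrt_mul (by positivity), Real.sqrt_inv]
  have h2 : Real.exp (-(y - a) ^ 2 / 2) * Real.exp (-(t * y ^ 2)) =
      Real.exp (-(t * a ^ 2 / (1 + 2 * t))) *
        Real.exp (-(y - a / (1 + 2 * t)) ^ 2 / (2 * (1 + 2 * t)⁻¹)) := by
    rw [← Real.exp_add, ← Real.exp_add]
    congr 1
    field_simp
    ring
  rw [h1]
  have h3 : 0 < Real.sqrt (1 + 2 * t) := Real.sqrt_pos.2 hw
  calc _ = (Real.sqrt (2 * Real.pi))⁻¹ * (Real.exp (-(y - a) ^ 2 / 2) * Real.exp (-(t * y ^ 2))) *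
          f y := by ring
    _ = _ := by
        rw [h2]
        field_simp

lemma gauss_m0 (a : ℝ) {t : ℝ} (ht : 0 < t) :
    ∫ y, Real.exp (-(t * y ^ 2)) ∂(gaussianReal a 1) =
      (Real.sqrt (1 + 2 * t))⁻¹ * Real.exp (-(t * a ^ 2 / (1 + 2 * t))) := by
  have := gauss_tilt (fun _ => 1) a ht
  simpa using this

lemma gauss_m1 (a : ℝ) {t : ℝ} (ht : 0 < t) :
    ∫ y, y * Real.exp (-(t * y ^ 2)) ∂(gaussianReal a 1) =
      (Real.sqrt (1 + 2 * t))⁻¹ * Real.exp (-(t * a ^ 2 / (1 + 2 * t))) * (a / (1 + 2 * t)) := by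
  have := gauss_tilt (fun y => y) a ht
  rw [this, integral_id_gaussianReal]

lemma gauss_m2 {t : ℝ} (ht : 0 < t) :
    ∫ y, y ^ 2 * Real.exp (-(t * y ^ 2)) ∂(gaussianReal 0 1) =
      (Real.sqrt (1 + 2 * t))⁻¹ * Real.exp (-(t * 0 ^ 2 / (1 + 2 * t))) * (1 / (1 + 2 * t)) := by
  have hw : 0 < 1 + 2 * t := by linarith
  have := gauss_tilt (fun y => y ^ 2) 0 ht
  rw [this]
  congr 1
  rw [zero_div]
  have h := variance_fun_id_gaussianReal (μ := 0) (v := Real.toNNReal (1 + 2 * t)⁻¹)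
  rw [variance_of_integral_eq_zero (by fun_prop) (by simp)] at h
  rw [h, Real.coe_toNNReal _ (inv_pos.2 hw).le, one_div]

/-- Mean vector `x e₀`. -/
def mv (k : ℕ) (x : ℝ) (i : Fin (k + 1)) : ℝ := if i = 0 then x else 0

def gam (k : ℕ) (x : ℝ) : Measure (Fin (k + 1) → ℝ) :=
  Measure.pi fun i => gaussianReal (mv k x i) 1

instance (k : ℕ) (x : ℝ) : IsProbabilityMeasure (gam k x) := by
  unfold gam; infer_instance

def sq2 {k : ℕ} (y : Fin (k + 1) → ℝ) : ℝ := ∑ i, y i ^ 2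

lemma sq2_nonneg {k : ℕ} (y : Fin (k + 1) → ℝ) : 0 ≤ sq2 y :=
  Finset.sum_nonneg fun _ _ => sq_nonneg _

lemma gam_prod (k : ℕ) (x : ℝ) {t : ℝ} (ht : 0 < t) (j : Fin (k + 1)) (φ : ℝ → ℝ) (r : ℝ)
    (h : ∫ y, φ y * Real.exp (-(t * y ^ 2)) ∂(gaussianReal (mv k x j) 1) =
      (Real.sqrt (1 + 2 * t))⁻¹ * Real.exp (-(t * mv k x j ^ 2 / (1 + 2 * t))) * r) :
    ∫ y, φ (y j) * Real.exp (-(sq2 y * t)) ∂(gam k x) =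
      r * ((Real.sqrt (1 + 2 * t))⁻¹ ^ (k + 1) * Real.exp (-(t * x ^ 2 / (1 + 2 * t)))) := by
  have e1 : ∀ y : Fin (k + 1) → ℝ, φ (y j) * Real.exp (-(sq2 y * t)) =
      ∏ i, (if i = j then φ (y i) else 1) * Real.exp (-(t * (y i) ^ 2)) := by
    intro y
    rw [Finset.prod_mul_distrib, ← Real.exp_sum]
    congr 1
    · simp
    · rw [sq2, Finset.sum_mul, ← Finset.sum_neg_distrib]
      congr 1
      exact Finset.sum_congr rfl fun i _ => by ring
  simp_rw [e1]
  rw [gam, integral_fintype_prod_eq_prod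
    (f := fun i y => (if i = j then φ y else 1) * Real.exp (-(t * y ^ 2)))]
  have e2 : ∀ i, ∫ y, (if i = j then φ y else 1) * Real.exp (-(t * y ^ 2))
      ∂(gaussianReal (mv k x i) 1) = (if i = j then r else 1) *
      ((Real.sqrt (1 + 2 * t))⁻¹ * Real.exp (-(t * mv k x i ^ 2 / (1 + 2 * t)))) := by
    intro i
    by_cases hij : i = j
    · subst hij; simp only [if_true]; rw [h]; ring
    · simp only [hij, if_false, one_mul]; rw [gauss_m0 _ ht]
  simp_rw [e2]
  rw [Finset.prod_mul_distrib, Finset.prod_mul_distrib, ← Real.exp_sum]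
  have e3 : ∑ i, -(t * mv k x i ^ 2 / (1 + 2 * t)) = -(t * x ^ 2 / (1 + 2 * t)) := by
    rw [Finset.sum_eq_single 0]
    · simp [mv]
    · intro i _ hi; simp [mv, hi]
    · simp
  rw [e3]
  simp

lemma polar_formula {k : ℕ} (γ : Measure (Fin (k + 1) → ℝ)) [IsProbabilityMeasure γ]
    {f : (Fin (k + 1) → ℝ) → ℝ}
    (hf : Measurable f) {p : ℝ} (hp : 0 < p) (hfp : ∀ y, |f y| ≤ (sq2 y) ^ p) :
    ∫ y, f y / (sq2 y) ^ p ∂γ = (Real.Gamma p)⁻¹ *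
      ∫ t in Set.Ioi (0 : ℝ), t ^ (p - 1) * ∫ y, f y * Real.exp (-(sq2 y * t)) ∂γ := by
  have hG := Real.Gamma_pos_of_pos hp
  have hms : Measurable (fun y : Fin (k + 1) → ℝ => sq2 y) := by unfold sq2; fun_prop
  have hval : ∀ y, ∫ t in Set.Ioi (0 : ℝ), f y * (t ^ (p - 1) * Real.exp (-(sq2 y * t))) =
      Real.Gamma p * (f y / (sq2 y) ^ p) := by
    intro y
    rcases (sq2_nonneg y).eq_or_lt with h0 | h0
    · have : f y = 0 := by
        have := hfp y
        rw [← h0, Real.zero_rpow hp.ne'] at this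
        exact abs_eq_zero.1 (le_antisymm this (abs_nonneg _))
      simp [this]
    · rw [integral_const_mul, Real.integral_rpow_mul_exp_neg_mul_Ioi hp h0, one_div,
        Real.inv_rpow h0.le]
      ring
  have hintg : ∀ y, Integrable (fun t => f y * (t ^ (p - 1) * Real.exp (-(sq2 y * t))))
      (volume.restrict (Set.Ioi (0:ℝ))) := by
    intro y
    by_cases h0 : f y = 0
    · simp [h0]
    · refine not_imp_comm.1 integral_undef ?_
      rw [hval]
      have hs : 0 < sq2 y := by
        rcases (sq2_nonneg y).eq_or_lt with h | h
        · exfalso; apply h0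
          have := hfp y
          rw [← h, Real.zero_rpow hp.ne'] at this
          exact abs_eq_zero.1 (le_antisymm this (abs_nonneg _))
        · exact h
      have := Real.rpow_pos_of_pos hs p
      exact mul_ne_zero hG.ne' (div_ne_zero h0 this.ne')
  have hnorm : ∀ y, ∫ t in Set.Ioi (0 : ℝ), ‖f y * (t ^ (p - 1) * Real.exp (-(sq2 y * t)))‖ =
      Real.Gamma p * (|f y| / (sq2 y) ^ p) := by
    intro y
    have : ∫ t in Set.Ioi (0 : ℝ), ‖f y * (t ^ (p - 1) * Real.exp (-(sq2 y * t)))‖ =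
        ∫ t in Set.Ioi (0 : ℝ), |f y| * (t ^ (p - 1) * Real.exp (-(sq2 y * t))) := by
      refine setIntegral_congr_fun measurableSet_Ioi fun t ht => ?_
      have := Real.rpow_nonneg (le_of_lt (Set.mem_Ioi.1 ht)) (p - 1)
      simp only [norm_mul, Real.norm_eq_abs, abs_of_nonneg this, Real.abs_exp]
    rw [this]
    rcases abs_cases (f y) with h | h
    · rw [h.1, hval]
    · rw [h.1]; simp_rw [neg_mul]; rw [integral_neg, hval]; ring
  have hmeas : Measurable (Function.uncurry fun (y : Fin (k + 1) → ℝ) (t : ℝ) =>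
      f y * (t ^ (p - 1) * Real.exp (-(sq2 y * t)))) := by
    unfold Function.uncurry; fun_prop
  have hprod : Integrable (Function.uncurry fun (y : Fin (k + 1) → ℝ) (t : ℝ) =>
      f y * (t ^ (p - 1) * Real.exp (-(sq2 y * t)))) (γ.prod (volume.restrict (Set.Ioi (0:ℝ)))) := by
    rw [integrable_prod_iff hmeas.aestronglyMeasurable]
    refine ⟨Filter.Eventually.of_forall hintg, ?_⟩
    simp only [Function.uncurry]
    simp_rw [hnorm]
    refine Integrable.const_mul ?_ _
    refine Integrable.of_bound (C := 1)
      (hf.abs.div (hms.pow_const p)).aestronglyMeasurable (Filter.Eventually.of_forall fun y => ?_)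
    have h1 := Real.rpow_nonneg (sq2_nonneg y) p
    rw [Real.norm_of_nonneg (by positivity)]
    exact div_le_one_of_le₀ (hfp y) h1
  have hswap := integral_integral_swap hprod
  simp_rw [hval] at hswap
  rw [integral_const_mul] at hswap
  rw [eq_inv_mul_iff_mul_eq₀ hG.ne', hswap]
  refine integral_congr_ae (Filter.Eventually.of_forall fun t => ?_)
  simp only
  rw [← integral_const_mul]
  refine integral_congr_ae (Filter.Eventually.of_forall fun y => ?_)
  simp only
  ring

lemma subst_int (G : ℝ → ℝ) :
    ∫ t in Set.Ioi (0 : ℝ), G t =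
      ∫ u in Set.Ioo (0 : ℝ) 1, (1 / (2 * (1 - u) ^ 2)) * G (u / (2 * (1 - u))) := by
  have himg : (fun u : ℝ => u / (2 * (1 - u))) '' Set.Ioo 0 1 = Set.Ioi 0 := by
    ext t
    simp only [Set.mem_image, Set.mem_Ioo, Set.mem_Ioi]
    constructor
    · rintro ⟨u, ⟨h0, h1⟩, rfl⟩
      have : 0 < 1 - u := by linarith
      positivity
    · intro ht
      refine ⟨2 * t / (1 + 2 * t), ⟨by positivity, ?_⟩, ?_⟩
      · rw [div_lt_one (by positivity)]; linarith
      · have : 1 - 2 * t / (1 + 2 * t) = 1 / (1 + 2 * t) := by field_simp; ring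
        rw [this]; field_simp
  rw [← himg, integral_image_eq_integral_abs_deriv_smul (f' := fun u => 1 / (2 * (1 - u) ^ 2))
    measurableSet_Ioo]
  · refine setIntegral_congr_fun measurableSet_Ioo fun u hu => ?_
    simp only [smul_eq_mul]
    rw [abs_of_nonneg (by positivity)]
  · intro u hu
    have : 1 - u ≠ 0 := by linarith [hu.2]
    have hd : HasDerivAt (fun u : ℝ => u / (2 * (1 - u)))
        ((1 * (2 * (1 - u)) - u * (2 * (0 - 1))) / (2 * (1 - u)) ^ 2) u :=
      (hasDerivAt_id u).div (((hasDerivAt_const u (1:ℝ)).sub (hasDerivAt_id u)).const_mul 2)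
        (mul_ne_zero two_ne_zero this)
    refine (hd.congr_deriv ?_).hasDerivWithinAt
    field_simp
    ring
  · intro u hu v hv h
    have h1 : 1 - u ≠ 0 := by linarith [hu.2]
    have h2 : 1 - v ≠ 0 := by linarith [hv.2]
    simp only at h
    field_simp at h
    linarith

lemma radial_int {m : ℕ} (hm : 0 < m) {p : ℝ} (hp : 0 < p) (hpm : p < (m : ℝ) / 2 + 1) (x : ℝ) :
    ∫ t in Set.Ioi (0 : ℝ), t ^ (p - 1) * (1 / (1 + 2 * t) *
      ((Real.sqrt (1 + 2 * t))⁻¹ ^ m * Real.exp (-(t * x ^ 2 / (1 + 2 * t))))) =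
      (2 ^ p)⁻¹ * (Real.Gamma p * Real.Gamma ((m : ℝ) / 2 + 1 - p) / Real.Gamma ((m : ℝ) / 2 + 1) *
        kummerM p ((m : ℝ) / 2 + 1) (-x ^ 2 / 2)) := by
  rw [← kummer_int hp hpm, subst_int, ← integral_const_mul]
  refine setIntegral_congr_fun measurableSet_Ioo fun u hu => ?_
  have h1 : 0 < 1 - u := by linarith [hu.2]
  have hu0 := hu.1
  have e1 : 1 + 2 * (u / (2 * (1 - u))) = (1 - u)⁻¹ := by field_simp; ring
  rw [e1]
  have e2 : (Real.sqrt (1 - u)⁻¹)⁻¹ ^ m = (1 - u) ^ ((m : ℝ) / 2) := by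
    rw [Real.sqrt_inv, inv_inv, Real.sqrt_eq_rpow, ← Real.rpow_natCast, ← Real.rpow_mul h1.le]
    congr 1; ring
  have e3 : -(u / (2 * (1 - u)) * x ^ 2 / (1 - u)⁻¹) = -x ^ 2 / 2 * u := by
    field_simp
  have e4 : (u / (2 * (1 - u))) ^ (p - 1) = u ^ (p - 1) * ((2 ^ p)⁻¹ * 2) *
      ((1 - u) ^ p)⁻¹ * (1 - u) := by
    rw [Real.div_rpow hu0.le (by positivity), Real.mul_rpow (by norm_num) h1.le,
      Real.rpow_sub_one (by norm_num : (2:ℝ) ≠ 0), Real.rpow_sub_one h1.ne']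
    have := Real.rpow_pos_of_pos h1 p
    have := Real.rpow_pos_of_pos (by norm_num : (0:ℝ) < 2) p
    field_simp
  have e5 : (1 - u) ^ ((m : ℝ) / 2 + 1 - p - 1) = (1 - u) ^ ((m : ℝ) / 2) * ((1 - u) ^ p)⁻¹ := by
    rw [show (m : ℝ) / 2 + 1 - p - 1 = (m : ℝ) / 2 - p by ring, Real.rpow_sub h1]; rfl
  rw [e2, e3, e4, e5]
  field_simp

lemma gam_mean_zero (k : ℕ) (x : ℝ) :
    ∫ y, y 0 / Real.sqrt (sq2 y) ∂(gam k x) = varrho (k + 1) x := by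
  have hb : ∀ y : Fin (k + 1) → ℝ, |y 0| ≤ (sq2 y) ^ (1 / 2 : ℝ) := by
    intro y
    rw [← Real.sqrt_eq_rpow]
    apply Real.abs_le_sqrt
    exact Finset.single_le_sum (f := fun i => y i ^ 2) (fun _ _ => sq_nonneg _) (Finset.mem_univ 0)
  have h := polar_formula (gam k x) (f := fun y => y 0) (by fun_prop) (p := 1 / 2) (by norm_num) hb
  simp_rw [← Real.sqrt_eq_rpow] at h
  rw [h]
  have e : ∫ t in Set.Ioi (0 : ℝ), t ^ ((1 / 2 : ℝ) - 1) *
      ∫ y, y 0 * Real.exp (-(sq2 y * t)) ∂(gam k x) =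
      x * ∫ t in Set.Ioi (0 : ℝ), t ^ ((1 / 2 : ℝ) - 1) * (1 / (1 + 2 * t) *
      ((Real.sqrt (1 + 2 * t))⁻¹ ^ (k + 1) * Real.exp (-(t * x ^ 2 / (1 + 2 * t))))) := by
    rw [← integral_const_mul]
    refine setIntegral_congr_fun measurableSet_Ioi fun t ht => ?_
    rw [gam_prod k x ht 0 (fun y => y) (mv k x 0 / (1 + 2 * t)) (gauss_m1 _ ht)]
    simp only [mv, if_true]
    ring
  have hk : (0 : ℝ) ≤ k := by positivity
  rw [e, radial_int (Nat.succ_pos k) (by norm_num) (by push_cast; linarith), varrho,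
    ← Real.sqrt_eq_rpow]
  rw [show (((k + 1 : ℕ) : ℝ) + 2) / 2 = ((k + 1 : ℕ) : ℝ) / 2 + 1 by ring,
    show ((k + 1 : ℕ) : ℝ) / 2 + 1 - 1 / 2 = (((k + 1 : ℕ) : ℝ) + 1) / 2 by ring]
  have := Real.Gamma_pos_of_pos (by norm_num : (0:ℝ) < 1 / 2)
  field_simp

lemma gam_sq (k : ℕ) (x : ℝ) (j : Fin (k + 1)) (hj : j ≠ 0) :
    ∫ y, y j ^ 2 / sq2 y ∂(gam k x) = gFun (k + 1) x := by
  have hb : ∀ y : Fin (k + 1) → ℝ, |y j ^ 2| ≤ (sq2 y) ^ (1 : ℝ) := by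
    intro y
    rw [Real.rpow_one, abs_of_nonneg (sq_nonneg _)]
    exact Finset.single_le_sum (f := fun i => y i ^ 2) (fun _ _ => sq_nonneg _) (Finset.mem_univ j)
  have h := polar_formula (gam k x) (f := fun y => y j ^ 2) (by fun_prop) (p := 1) (by norm_num) hb
  simp_rw [Real.rpow_one] at h
  rw [h]
  have hmv : mv k x j = 0 := by simp [mv, hj]
  have e : ∫ t in Set.Ioi (0 : ℝ), t ^ ((1 : ℝ) - 1) *
      ∫ y, y j ^ 2 * Real.exp (-(sq2 y * t)) ∂(gam k x) =
      ∫ t in Set.Ioi (0 : ℝ), t ^ ((1 : ℝ) - 1) * (1 / (1 + 2 * t) *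
      ((Real.sqrt (1 + 2 * t))⁻¹ ^ (k + 1) * Real.exp (-(t * x ^ 2 / (1 + 2 * t))))) := by
    refine setIntegral_congr_fun measurableSet_Ioi fun t ht => ?_
    rw [gam_prod k x ht j (fun y => y ^ 2) (1 / (1 + 2 * t)) (by rw [hmv]; exact gauss_m2 ht)]
  have hk : (0 : ℝ) ≤ k := by positivity
  rw [e, radial_int (Nat.succ_pos k) (by norm_num) (by push_cast; linarith), gFun]
  have hg := Real.Gamma_add_one (s := ((k + 1 : ℕ) : ℝ) / 2) (by positivity)
  have := Real.Gamma_pos_of_pos (by positivity : (0:ℝ) < ((k + 1 : ℕ) : ℝ) / 2)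
  rw [hg, show ((k + 1 : ℕ) : ℝ) / 2 + 1 - 1 = ((k + 1 : ℕ) : ℝ) / 2 by ring, Real.Gamma_one,
    Real.rpow_one]
  have h5 : ((k + 1 : ℕ) : ℝ) ≠ 0 := by positivity
  field_simp

def flipAt {k : ℕ} (j : Fin (k + 1)) (y : Fin (k + 1) → ℝ) : Fin (k + 1) → ℝ :=
  fun i => if i = j then -y i else y i

lemma gam_flip (k : ℕ) (x : ℝ) {j : Fin (k + 1)} (hj : j ≠ 0) :
    (gam k x).map (flipAt j) = gam k x := by
  have h := Measure.pi_map_pi (μ := fun i => gaussianReal (mv k x i) 1)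
    (f := fun i (y : ℝ) => if i = j then -y else y)
    (by intro i; by_cases h : i = j <;> simp only [h, if_true, if_false] <;> fun_prop)
  change (gam k x).map (flipAt j) = _ at h
  rw [h, gam]
  congr 1
  funext i
  by_cases hi : i = j
  · subst hi
    have : mv k x i = 0 := by simp [mv, hj]
    simp only [if_true, this]
    have := gaussianReal_map_neg (μ := 0) (v := 1)
    simpa using this
  · simp only [hi, if_false]
    exact Measure.map_id

lemma gam_odd (k : ℕ) (x : ℝ) {j : Fin (k + 1)} (hj : j ≠ 0) {F : (Fin (k + 1) → ℝ) → ℝ}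
    (hF : Measurable F) (h : ∀ y, F (flipAt j y) = -F y) : ∫ y, F y ∂(gam k x) = 0 := by
  have hm : Measurable (flipAt j) := by
    refine measurable_pi_lambda _ fun i => ?_
    unfold flipAt
    by_cases h : i = j <;> simp only [h, if_true, if_false] <;> fun_prop
  have h1 : ∫ y, F y ∂(gam k x) = ∫ y, F (flipAt j y) ∂(gam k x) := by
    conv_lhs => rw [← gam_flip k x hj]
    rw [integral_map hm.aemeasurable hF.aestronglyMeasurable]
  simp_rw [h] at h1
  rw [integral_neg] at h1
  linarith

lemma sq2_flip {k : ℕ} (j : Fin (k + 1)) (y : Fin (k + 1) → ℝ) : sq2 (flipAt j y) = sq2 y := by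
  unfold sq2 flipAt
  refine Finset.sum_congr rfl fun i _ => ?_
  by_cases h : i = j <;> simp [h]

lemma sq2_measurable {k : ℕ} : Measurable (fun y : Fin (k + 1) → ℝ => sq2 y) := by
  unfold sq2; fun_prop

lemma gam_mean_ne (k : ℕ) (x : ℝ) {j : Fin (k + 1)} (hj : j ≠ 0) :
    ∫ y, y j / Real.sqrt (sq2 y) ∂(gam k x) = 0 := by
  refine gam_odd k x hj ?_ fun y => ?_
  · exact (measurable_pi_apply j).div sq2_measurable.sqrt
  · rw [sq2_flip]; simp [flipAt, neg_div]

lemma gam_cross (k : ℕ) (x : ℝ) {i j : Fin (k + 1)} (hij : i ≠ j) :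
    ∫ y, y i * y j / sq2 y ∂(gam k x) = 0 := by
  have hm : Measurable (fun y : Fin (k + 1) → ℝ => y i * y j / sq2 y) :=
    ((measurable_pi_apply i).mul (measurable_pi_apply j)).div sq2_measurable
  by_cases hj : j = 0
  · have hi : i ≠ 0 := fun h => hij (h.trans hj.symm)
    refine gam_odd k x hi hm fun y => ?_
    rw [sq2_flip]; simp [flipAt, hij.symm, neg_div]
  · refine gam_odd k x hj hm fun y => ?_
    rw [sq2_flip]; simp [flipAt, hij, neg_div]

lemma abs_le_sqrt_sq2 {k : ℕ} (y : Fin (k + 1) → ℝ) (i : Fin (k + 1)) : |y i| ≤ Real.sqrt (sq2 y) := by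
  apply Real.abs_le_sqrt
  exact Finset.single_le_sum (f := fun i => y i ^ 2) (fun _ _ => sq_nonneg _) (Finset.mem_univ i)

lemma gam_cross_integrable (k : ℕ) (x : ℝ) (i j : Fin (k + 1)) :
    Integrable (fun y => y i * y j / sq2 y) (gam k x) := by
  have hm : Measurable (fun y : Fin (k + 1) → ℝ => y i * y j / sq2 y) :=
    ((measurable_pi_apply i).mul (measurable_pi_apply j)).div sq2_measurable
  refine Integrable.of_bound (C := 1) hm.aestronglyMeasurable (Filter.Eventually.of_forall fun y => ?_)
  rw [norm_div, norm_mul, Real.norm_of_nonneg (sq2_nonneg y)]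
  refine div_le_one_of_le₀ ?_ (sq2_nonneg y)
  calc ‖y i‖ * ‖y j‖ ≤ Real.sqrt (sq2 y) * Real.sqrt (sq2 y) :=
        mul_le_mul (abs_le_sqrt_sq2 y i) (abs_le_sqrt_sq2 y j) (norm_nonneg _) (Real.sqrt_nonneg _)
    _ = _ := Real.mul_self_sqrt (sq2_nonneg y)

lemma gam_lin_integrable (k : ℕ) (x : ℝ) (i : Fin (k + 1)) :
    Integrable (fun y => y i / Real.sqrt (sq2 y)) (gam k x) := by
  have hm : Measurable (fun y : Fin (k + 1) → ℝ => y i / Real.sqrt (sq2 y)) :=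
    (measurable_pi_apply i).div sq2_measurable.sqrt
  refine Integrable.of_bound (C := 1) hm.aestronglyMeasurable (Filter.Eventually.of_forall fun y => ?_)
  rw [norm_div, Real.norm_of_nonneg (Real.sqrt_nonneg _)]
  exact div_le_one_of_le₀ (abs_le_sqrt_sq2 y i) (Real.sqrt_nonneg _)

lemma gam_ae_ne (k : ℕ) (x : ℝ) : ∀ᵐ y ∂(gam k x), sq2 y ≠ 0 := by
  have h0 : ∀ᵐ r ∂(gaussianReal (mv k x 0) 1), r ≠ 0 := by
    have := nullSingletonClass_gaussianReal (μ := mv k x 0) (v := 1) one_ne_zero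
    rw [ae_iff]
    simp
  have h1 : ∀ᵐ y ∂(gam k x), y 0 ≠ 0 :=
    (measurePreserving_eval (fun i => gaussianReal (mv k x i) 1) 0).quasiMeasurePreserving.ae h0
  filter_upwards [h1] with y hy h
  have := abs_le_sqrt_sq2 y 0
  rw [h, Real.sqrt_zero] at this
  exact hy (abs_eq_zero.1 (le_antisymm this (abs_nonneg _)))

lemma gam_sq_zero (k : ℕ) (x : ℝ) :
    ∫ y, y 0 * y 0 / sq2 y ∂(gam k x) = 1 - k * gFun (k + 1) x := by
  have h1 : ∫ y, ∑ i, y i * y i / sq2 y ∂(gam k x) = 1 := by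
    have : (fun y : Fin (k + 1) → ℝ => ∑ i, y i * y i / sq2 y) =ᵐ[gam k x] fun _ => (1 : ℝ) := by
      filter_upwards [gam_ae_ne k x] with y hy
      rw [← Finset.sum_div]
      have : ∑ i, y i * y i = sq2 y := Finset.sum_congr rfl fun i _ => by ring
      rw [this, div_self hy]
    rw [integral_congr_ae this]; simp
  rw [integral_finsetSum _ (fun i _ => gam_cross_integrable k x i i), Fin.sum_univ_succ] at h1
  have h2 : ∀ i : Fin k, ∫ y, y i.succ * y i.succ / sq2 y ∂(gam k x) = gFun (k + 1) x := by
    intro i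
    rw [← gam_sq k x i.succ (Fin.succ_ne_zero i)]
    simp_rw [sq]
  simp_rw [h2] at h1
  simp at h1
  linarith

def TT {k : ℕ} (a y : Fin (k + 1) → ℝ) : ℝ := (∑ i, a i * y i) / Real.sqrt (sq2 y)

lemma TT_meas {k : ℕ} (a : Fin (k + 1) → ℝ) : Measurable (TT a) := by
  have h1 : Measurable (fun y : Fin (k + 1) → ℝ => ∑ i, a i * y i) := by fun_prop
  exact h1.div sq2_measurable.sqrt

lemma TT_mean (k : ℕ) (x : ℝ) (a : Fin (k + 1) → ℝ) :
    ∫ y, TT a y ∂(gam k x) = a 0 * varrho (k + 1) x := by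
  have : ∀ y, TT a y = ∑ i, a i * (y i / Real.sqrt (sq2 y)) := by
    intro y
    rw [TT, Finset.sum_div]
    exact Finset.sum_congr rfl fun i _ => by ring
  simp_rw [this]
  rw [integral_finsetSum _ (fun i _ => (gam_lin_integrable k x i).const_mul _)]
  simp_rw [integral_const_mul]
  rw [Finset.sum_eq_single 0]
  · rw [gam_mean_zero]
  · intro j _ hj; rw [gam_mean_ne k x hj, mul_zero]
  · simp

lemma TT_sq (k : ℕ) (x : ℝ) (a : Fin (k + 1) → ℝ) (ha : ∑ i, a i ^ 2 = 1) :
    ∫ y, TT a y ^ 2 ∂(gam k x) =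
      gFun (k + 1) x + a 0 ^ 2 * (1 - (k + 1) * gFun (k + 1) x) := by
  have : ∀ y, TT a y ^ 2 = ∑ i, ∑ j, (a i * a j) * (y i * y j / sq2 y) := by
    intro y
    rw [TT, div_pow, Real.sq_sqrt (sq2_nonneg y), sq, Finset.sum_mul_sum, Finset.sum_div]
    refine Finset.sum_congr rfl fun i _ => ?_
    rw [Finset.sum_div]
    exact Finset.sum_congr rfl fun j _ => by ring
  simp_rw [this]
  have hi : ∀ i j, Integrable (fun y => (a i * a j) * (y i * y j / sq2 y)) (gam k x) :=
    fun i j => (gam_cross_integrable k x i j).const_mul _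
  rw [integral_finsetSum _ (fun i _ => integrable_finsetSum _ fun j _ => hi i j)]
  have h2 : ∀ i, ∫ y, ∑ j, (a i * a j) * (y i * y j / sq2 y) ∂(gam k x) =
      a i ^ 2 * ∫ y, y i * y i / sq2 y ∂(gam k x) := by
    intro i
    rw [integral_finsetSum _ (fun j _ => hi i j)]
    simp_rw [integral_const_mul]
    rw [Finset.sum_eq_single i]
    · ring
    · intro j _ hj; rw [gam_cross k x hj.symm, mul_zero]
    · simp
  simp_rw [h2]
  rw [Fin.sum_univ_succ, gam_sq_zero]
  have h3 : ∀ i : Fin k, ∫ y, y i.succ * y i.succ / sq2 y ∂(gam k x) = gFun (k + 1) x := by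
    intro i
    rw [← gam_sq k x i.succ (Fin.succ_ne_zero i)]
    simp_rw [sq]
  simp_rw [h3]
  rw [← Finset.sum_mul]
  rw [Fin.sum_univ_succ] at ha
  have : ∑ i : Fin k, a i.succ ^ 2 = 1 - a 0 ^ 2 := by linarith
  rw [this]
  ring

lemma TT_obj (k : ℕ) (x : ℝ) (a : Fin (k + 1) → ℝ) (ha : ∑ i, a i ^ 2 = 1) (lam : ℝ) :
    ∫ y, TT a y ∂(gam k x) - lam * variance (TT a) (gam k x) =
      a 0 * varrho (k + 1) x - lam * (gFun (k + 1) x +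
        a 0 ^ 2 * (1 - (k + 1) * gFun (k + 1) x - varrho (k + 1) x ^ 2)) := by
  have hb : ∀ y, ‖TT a y‖ ≤ 1 := by
    intro y
    rw [TT, norm_div, Real.norm_of_nonneg (Real.sqrt_nonneg _)]
    refine div_le_one_of_le₀ ?_ (Real.sqrt_nonneg _)
    apply Real.abs_le_sqrt
    have := Finset.sum_mul_sq_le_sq_mul_sq Finset.univ a y
    rw [ha, one_mul] at this
    exact this
  have hmem : MemLp (TT a) 2 (gam k x) :=
    MemLp.of_bound (TT_meas a).aestronglyMeasurable 1 (Filter.Eventually.of_forall hb)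
  rw [variance_eq_sub hmem]
  have h2 := TT_sq k x a ha
  have h1 := TT_mean k x a
  simp only [Pi.pow_apply]
  rw [h1, h2]
  ring

lemma fFun_eq (k : ℕ) (x : ℝ) :
    fFun (k + 1) x = 1 - k * gFun (k + 1) x - varrho (k + 1) x ^ 2 := by
  rw [fFun, gFun]; push_cast; ring

lemma TT_final (k : ℕ) {x : ℝ} (hx : 0 ≤ x) (a : Fin (k + 1) → ℝ) (ha : ∑ i, a i ^ 2 = 1)
    {lam : ℝ} (hl : 0 ≤ lam) :
    ∫ y, TT a y ∂(gam k x) - lam * variance (TT a) (gam k x) ≤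
      varrho (k + 1) x - lam * fFun (k + 1) x := by
  rw [TT_obj k x a ha, fFun_eq]
  have h1 := varrho_nonneg (m := k + 1) hx
  have h2 := varrho_ineq (m := k + 1) (by omega) (x := x)
  have h3 : (k + 1) * gFun (k + 1) x = kummerM 1 (((k + 1 : ℕ) : ℝ) / 2 + 1) (-x ^ 2 / 2) := by
    rw [gFun]; push_cast
    have : (k : ℝ) + 1 ≠ 0 := by positivity
    field_simp
  have h4 : 1 - (k + 1) * gFun (k + 1) x - varrho (k + 1) x ^ 2 ≤ 0 := by rw [h3]; linarith
  have ha0 : a 0 ^ 2 ≤ 1 := by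
    rw [← ha]
    exact Finset.single_le_sum (f := fun i => a i ^ 2) (fun _ _ => sq_nonneg _) (Finset.mem_univ 0)
  have ha1 : a 0 ≤ 1 := by nlinarith
  have e1 : 0 ≤ (1 - a 0) * varrho (k + 1) x := mul_nonneg (by linarith) h1
  have e2 : 0 ≤ lam * ((1 - a 0 ^ 2) * -(1 - (k + 1) * gFun (k + 1) x - varrho (k + 1) x ^ 2)) :=
    mul_nonneg hl (mul_nonneg (by linarith) (by linarith))
  nlinarith

lemma TT_final_eq (k : ℕ) (x : ℝ) (a : Fin (k + 1) → ℝ) (ha : ∑ i, a i ^ 2 = 1) (h0 : a 0 = 1)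
    (lam : ℝ) :
    ∫ y, TT a y ∂(gam k x) - lam * variance (TT a) (gam k x) =
      varrho (k + 1) x - lam * fFun (k + 1) x := by
  rw [TT_obj k x a ha, fFun_eq, h0]
  ring

lemma law_ortho {m n : ℕ} (L : Matrix (Fin m) (Fin n) ℝ) (hL : L * Lᵀ = 1) :
    (stdGaussianPi n).map (fun v => L.mulVec v) = stdGaussianPi m := by
  let LL : (Fin n → ℝ) →L[ℝ] (Fin m → ℝ) := LinearMap.toContinuousLinearMap (Matrix.mulVecLin L)
  have hLL : (fun v => L.mulVec v) = LL := by funext v; rfl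
  have key : ∀ (j : ℕ) (D : StrongDual ℝ (Fin j → ℝ)), charFunDual (stdGaussianPi j) D =
      Complex.exp (((-(∑ i, (D (Pi.single i 1)) ^ 2) / 2 : ℝ)) : ℂ) := by
    intro j D
    rw [stdGaussianPi, charFunDual_pi]
    have : ∀ i : Fin j, charFunDual (gaussianReal 0 1) (D.comp (.single ℝ (fun _ => ℝ) i)) =
        Complex.exp (((-(D (Pi.single i 1)) ^ 2 / 2 : ℝ)) : ℂ) := by
      intro i
      have e : charFunDual (gaussianReal 0 1) (D.comp (.single ℝ (fun _ => ℝ) i)) =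
          charFun (gaussianReal 0 1) (D (Pi.single i 1)) := by
        rw [charFunDual_apply, charFun_apply_real]
        refine integral_congr_ae (Filter.Eventually.of_forall fun y => ?_)
        have h1 : (Pi.single i y : Fin j → ℝ) = y • Pi.single i 1 := by
          rw [← Pi.single_smul]; simp
        simp only [ContinuousLinearMap.comp_apply, ContinuousLinearMap.single_apply]
        rw [h1, map_smul, smul_eq_mul]
        push_cast
        ring_nf
      rw [e, charFun_gaussianReal]
      congr 1
      push_cast
      simp
      ring
    simp_rw [this]
    rw [← Complex.exp_sum, ← Complex.ofReal_sum]
    congr 2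
    rw [← Finset.sum_neg_distrib, Finset.sum_div]
  have : IsProbabilityMeasure (stdGaussianPi n) := by unfold stdGaussianPi; infer_instance
  have : IsProbabilityMeasure (stdGaussianPi m) := by unfold stdGaussianPi; infer_instance
  rw [hLL]
  have : IsProbabilityMeasure ((stdGaussianPi n).map LL) :=
    Measure.isProbabilityMeasure_map LL.continuous.measurable.aemeasurable
  apply Measure.ext_of_charFunDual
  ext D
  rw [charFunDual_map, key, key]
  congr 4
  have h1 : ∀ w : Fin m → ℝ, D w = ∑ i, w i * D (Pi.single i 1) := by
    intro w
    conv_lhs => rw [pi_eq_sum_univ' w]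
    rw [map_sum]
    refine Finset.sum_congr rfl fun i _ => ?_
    rw [map_smul, smul_eq_mul]
  set d : Fin m → ℝ := fun i => D (Pi.single i 1) with hd
  have h2 : ∀ l : Fin n, (D.comp LL) (Pi.single l 1) = ∑ i, L i l * d i := by
    intro l
    rw [ContinuousLinearMap.comp_apply, h1]
    refine Finset.sum_congr rfl fun i _ => ?_
    congr 1
    change (L.mulVec (Pi.single l 1)) i = _
    simp
  simp_rw [h2]
  have h3 : ∀ i j, ∑ l, L i l * L j l = if i = j then 1 else 0 := by
    intro i j
    have := congrFun (congrFun hL i) j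
    rw [Matrix.mul_apply] at this
    simpa [Matrix.one_apply] using this
  calc ∑ l, (∑ i, L i l * d i) ^ 2 = ∑ l, ∑ i, ∑ j, (L i l * L j l) * (d i * d j) := by
        refine Finset.sum_congr rfl fun l _ => ?_
        rw [sq, Finset.sum_mul_sum]
        refine Finset.sum_congr rfl fun i _ => Finset.sum_congr rfl fun j _ => by ring
    _ = ∑ i, ∑ j, (∑ l, L i l * L j l) * (d i * d j) := by
        rw [Finset.sum_comm]
        refine Finset.sum_congr rfl fun i _ => ?_
        rw [Finset.sum_comm]
        refine Finset.sum_congr rfl fun j _ => ?_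
        rw [Finset.sum_mul]
    _ = ∑ i, d i ^ 2 := by
        simp_rw [h3]
        simp [sq]

lemma law_shift (k : ℕ) (x : ℝ) :
    (stdGaussianPi (k + 1)).map (fun v i => mv k x i + v i) = gam k x := by
  have h := Measure.pi_map_pi (μ := fun _ : Fin (k + 1) => gaussianReal 0 1)
    (f := fun i (y : ℝ) => mv k x i + y) (by intro i; fun_prop)
  rw [stdGaussianPi, h, gam]
  congr 1
  funext i
  rw [gaussianReal_map_const_add, zero_add]

lemma exists_ortho (k : ℕ) (u : Fin (k + 2) → ℝ) (hu : ∑ i, u i ^ 2 = 1) (hu0 : ∑ i, u i = 0) :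
    ∃ Q : Matrix (Fin (k + 2)) (Fin (k + 2)) ℝ, Q * Qᵀ = 1 ∧ (∀ l, Q 0 l = u l) ∧
      ∀ l, Q (Fin.last (k + 1)) l = (Real.sqrt (k + 2))⁻¹ := by
  let E := EuclideanSpace ℝ (Fin (k + 2))
  let v : Fin (k + 2) → E := fun i =>
    if i = 0 then WithLp.toLp 2 u else WithLp.toLp 2 (fun _ => (Real.sqrt (k + 2))⁻¹)
  have h0l : (Fin.last (k + 1)) ≠ (0 : Fin (k + 2)) := by
    exact (Fin.last_pos).ne'
  have hs : Real.sqrt ((k : ℝ) + 2) ^ 2 = k + 2 := Real.sq_sqrt (by positivity)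
  have hs0 : 0 < Real.sqrt ((k : ℝ) + 2) := Real.sqrt_pos.2 (by positivity)
  have hin : ∀ a b : Fin (k + 2) → ℝ, inner ℝ (WithLp.toLp 2 a : E) (WithLp.toLp 2 b : E) =
      ∑ i, a i * b i := by
    intro a b
    rw [PiLp.inner_apply]
    refine Finset.sum_congr rfl fun i _ => ?_
    simp [mul_comm]
  have hv : Orthonormal ℝ (({0, Fin.last (k + 1)} : Set (Fin (k + 2))).domRestrict v) := by
    rw [orthonormal_iff_ite]
    rintro ⟨i, hi⟩ ⟨j, hj⟩
    simp only [Set.domRestrict_apply, Subtype.mk.injEq]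
    rcases hi with rfl | hi <;> rcases hj with rfl | hj
    · simp only [v, if_true, hin]
      rw [← hu]; exact Finset.sum_congr rfl fun i _ => by ring
    · rw [Set.mem_singleton_iff] at hj; subst hj
      simp only [v, if_true, h0l, if_false, hin, h0l.symm]
      rw [← Finset.sum_mul, hu0, zero_mul]
    · rw [Set.mem_singleton_iff] at hi; subst hi
      simp only [v, if_true, h0l, if_false, hin]
      rw [← Finset.mul_sum, hu0, mul_zero]
    · rw [Set.mem_singleton_iff] at hi hj; subst hi; subst hj
      simp only [v, if_true, h0l, if_false, hin]
      simp only [Finset.sum_const, Finset.card_univ, Fintype.card_fin, nsmul_eq_mul]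
      push_cast
      rw [← sq, inv_pow, hs]
      field_simp
  obtain ⟨b, hb⟩ := hv.exists_orthonormalBasis_extension_of_card_eq (by simp [E])
  refine ⟨Matrix.of fun i l => b i l, ?_, ?_, ?_⟩
  · ext i j
    rw [Matrix.mul_apply, Matrix.one_apply]
    have := orthonormal_iff_ite.1 b.orthonormal i j
    rw [← this, PiLp.inner_apply]
    refine Finset.sum_congr rfl fun l _ => ?_
    simp [Matrix.transpose_apply, mul_comm]
  · intro l
    change b 0 l = _
    rw [hb 0 (by simp)]; simp [v]
  · intro l
    change b (Fin.last (k + 1)) l = _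
    rw [hb _ (by simp)]; simp [v, h0l]

lemma center_apply {n : ℕ} (z : Fin n → ℝ) (i : Fin n) :
    (centerMat n).mulVec z i = z i - (n : ℝ)⁻¹ * ∑ j, z j := by
  rw [centerMat, Matrix.sub_mulVec, Matrix.one_mulVec, Pi.sub_apply, Matrix.smul_mulVec]
  simp [Matrix.mulVec, dotProduct]

lemma center_sum {n : ℕ} (hn : n ≠ 0) (z : Fin n → ℝ) : ∑ i, (centerMat n).mulVec z i = 0 := by
  simp_rw [center_apply]
  rw [Finset.sum_sub_distrib]
  have : (n : ℝ) ≠ 0 := by exact_mod_cast hn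
  simp
  field_simp
  ring

lemma euclNorm_pos {n : ℕ} {z : Fin n → ℝ} (hz : z ≠ 0) : 0 < euclNorm z := by
  rw [euclNorm, Real.sqrt_pos]
  obtain ⟨i, hi⟩ := Function.ne_iff.1 hz
  exact Finset.sum_pos' (fun _ _ => sq_nonneg _) ⟨i, Finset.mem_univ _, by
    have : z i ≠ 0 := hi
    positivity⟩

lemma euclNorm_sq {n : ℕ} (z : Fin n → ℝ) : euclNorm z ^ 2 = ∑ i, z i ^ 2 :=
  Real.sq_sqrt (Finset.sum_nonneg fun _ _ => sq_nonneg _)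

lemma chi_props {n : ℕ} (hn : n ≠ 0) (μ : Fin n → ℝ) (h : (centerMat n).mulVec μ ≠ 0) :
    (∑ i, chi μ i ^ 2 = 1) ∧ ∑ i, chi μ i = 0 := by
  have hp := euclNorm_pos h
  have hs := euclNorm_sq ((centerMat n).mulVec μ)
  unfold chi
  simp only [Pi.smul_apply, smul_eq_mul]
  constructor
  · simp_rw [mul_pow]
    rw [← Finset.mul_sum, ← hs]
    field_simp
  · rw [← Finset.mul_sum, center_sum hn, mul_zero]

lemma ortho_dot {n : ℕ} (Q : Matrix (Fin n) (Fin n) ℝ) (hQ : Q * Qᵀ = 1) (a b : Fin n → ℝ) :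
    a ⬝ᵥ b = (Q.mulVec a) ⬝ᵥ (Q.mulVec b) := by
  have hQ' : Qᵀ * Q = 1 := mul_eq_one_comm.1 hQ
  rw [Matrix.dotProduct_mulVec, Matrix.vecMul_mulVec, hQ', Matrix.vecMul_one]

lemma row_sum {k : ℕ} (Q : Matrix (Fin (k + 2)) (Fin (k + 2)) ℝ) (hQ : Q * Qᵀ = 1)
    (hl : ∀ l, Q (Fin.last (k + 1)) l = (Real.sqrt (k + 2))⁻¹) (i : Fin (k + 1)) :
    ∑ l, Q i.castSucc l = 0 := by
  have h := congrFun (congrFun hQ i.castSucc) (Fin.last (k + 1))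
  rw [Matrix.mul_apply, Matrix.one_apply, if_neg (Fin.castSucc_lt_last i).ne] at h
  simp only [Matrix.transpose_apply, hl] at h
  rw [← Finset.sum_mul] at h
  have hs0 : 0 < Real.sqrt ((k : ℝ) + 2) := Real.sqrt_pos.2 (by positivity)
  rcases mul_eq_zero.1 h with h | h
  · exact h
  · exact absurd h (inv_pos.2 hs0).ne'

lemma Q_center {k : ℕ} (Q : Matrix (Fin (k + 2)) (Fin (k + 2)) ℝ) (hQ : Q * Qᵀ = 1)
    (hl : ∀ l, Q (Fin.last (k + 1)) l = (Real.sqrt (k + 2))⁻¹) (z : Fin (k + 2) → ℝ)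
    (i : Fin (k + 1)) :
    Q.mulVec ((centerMat (k + 2)).mulVec z) i.castSucc = Q.mulVec z i.castSucc := by
  simp only [Matrix.mulVec, dotProduct]
  have := row_sum Q hQ hl i
  have e : ∀ l, (∑ j, centerMat (k + 2) l j * z j) = z l - ((k + 2 : ℕ) : ℝ)⁻¹ * ∑ j, z j :=
    fun l => center_apply z l
  simp_rw [e, mul_sub]
  rw [Finset.sum_sub_distrib, ← Finset.sum_mul, this]
  simp

lemma Q_last {k : ℕ} (Q : Matrix (Fin (k + 2)) (Fin (k + 2)) ℝ)
    (hl : ∀ l, Q (Fin.last (k + 1)) l = (Real.sqrt (k + 2))⁻¹) (z : Fin (k + 2) → ℝ)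
    (hz : ∑ i, z i = 0) : Q.mulVec z (Fin.last (k + 1)) = 0 := by
  simp only [Matrix.mulVec, dotProduct, hl]
  rw [← Finset.mul_sum, hz, mul_zero]

def cc {k : ℕ} (Q : Matrix (Fin (k + 2)) (Fin (k + 2)) ℝ) (s : ℝ) (z : Fin (k + 2) → ℝ) :
    Fin (k + 1) → ℝ := fun i => Q.mulVec z i.castSucc / s

lemma cc_dot {k : ℕ} (Q : Matrix (Fin (k + 2)) (Fin (k + 2)) ℝ) (hQ : Q * Qᵀ = 1)
    (hl : ∀ l, Q (Fin.last (k + 1)) l = (Real.sqrt (k + 2))⁻¹) (a b : Fin (k + 2) → ℝ)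
    (ha : ∑ i, a i = 0) :
    a ⬝ᵥ b = ∑ i : Fin (k + 1), Q.mulVec a i.castSucc * Q.mulVec b i.castSucc := by
  rw [ortho_dot Q hQ, dotProduct, Fin.sum_univ_castSucc, Q_last Q hl a ha, zero_mul, add_zero]

lemma chi_TT {k : ℕ} (Q : Matrix (Fin (k + 2)) (Fin (k + 2)) ℝ) (hQ : Q * Qᵀ = 1)
    (hl : ∀ l, Q (Fin.last (k + 1)) l = (Real.sqrt (k + 2))⁻¹) {s : ℝ} (hs : 0 < s)
    (θ z : Fin (k + 2) → ℝ) (hθ : ∑ i, θ i = 0) :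
    θ ⬝ᵥ chi z = TT (cc Q 1 θ) (cc Q s z) := by
  have h1 : θ ⬝ᵥ (centerMat (k + 2)).mulVec z = s * ∑ i, cc Q 1 θ i * cc Q s z i := by
    rw [cc_dot Q hQ hl _ _ hθ, Finset.mul_sum]
    refine Finset.sum_congr rfl fun i _ => ?_
    rw [Q_center Q hQ hl]
    unfold cc
    field_simp
  have h2 : euclNorm ((centerMat (k + 2)).mulVec z) = s * Real.sqrt (sq2 (cc Q s z)) := by
    have e : ∑ i, (centerMat (k + 2)).mulVec z i ^ 2 = s ^ 2 * sq2 (cc Q s z) := by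
      have := cc_dot Q hQ hl ((centerMat (k + 2)).mulVec z) ((centerMat (k + 2)).mulVec z)
        (center_sum (by omega) z)
      rw [dotProduct] at this
      simp_rw [sq]
      rw [this, sq2, Finset.mul_sum]
      refine Finset.sum_congr rfl fun i _ => ?_
      rw [Q_center Q hQ hl]
      unfold cc
      field_simp
    rw [euclNorm, e, Real.sqrt_mul (sq_nonneg _), Real.sqrt_sq hs.le]
  rw [chi, dotProduct_smul, h1, h2, TT, smul_eq_mul, mul_inv, div_eq_mul_inv]
  field_simp

lemma cc_norm {k : ℕ} (Q : Matrix (Fin (k + 2)) (Fin (k + 2)) ℝ) (hQ : Q * Qᵀ = 1)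
    (hl : ∀ l, Q (Fin.last (k + 1)) l = (Real.sqrt (k + 2))⁻¹)
    (θ : Fin (k + 2) → ℝ) (hθ : ∑ i, θ i = 0) (hθ1 : ∑ i, θ i ^ 2 = 1) :
    ∑ i, cc Q 1 θ i ^ 2 = 1 := by
  have := cc_dot Q hQ hl θ θ hθ
  rw [dotProduct] at this
  simp_rw [sq] at hθ1 ⊢
  rw [this] at hθ1
  simpa [cc] using hθ1

lemma cc_mu {k : ℕ} (Q : Matrix (Fin (k + 2)) (Fin (k + 2)) ℝ) (hQ : Q * Qᵀ = 1)
    (hl : ∀ l, Q (Fin.last (k + 1)) l = (Real.sqrt (k + 2))⁻¹) (s : ℝ)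
    (μ : Fin (k + 2) → ℝ) (hμ : (centerMat (k + 2)).mulVec μ ≠ 0)
    (h0 : ∀ l, Q 0 l = chi μ l) :
    cc Q s μ = mv k (euclNorm ((centerMat (k + 2)).mulVec μ) / s) := by
  have hp := euclNorm_pos hμ
  funext i
  have h1 : Q.mulVec μ i.castSucc =
      euclNorm ((centerMat (k + 2)).mulVec μ) * (Q * Qᵀ) i.castSucc 0 := by
    rw [← Q_center Q hQ hl, Matrix.mulVec, dotProduct, Matrix.mul_apply, Finset.mul_sum]
    refine Finset.sum_congr rfl fun l _ => ?_
    rw [Matrix.transpose_apply, h0, chi]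
    simp only [Pi.smul_apply, smul_eq_mul]
    field_simp
  rw [cc, h1, hQ, Matrix.one_apply, mv]
  have : (i.castSucc = 0) ↔ (i = 0) := by
    rw [← Fin.castSucc_zero, Fin.castSucc_inj]
  simp only [this]
  split_ifs <;> simp

lemma cc_meas {k : ℕ} (Q : Matrix (Fin (k + 2)) (Fin (k + 2)) ℝ) (s : ℝ) :
    Measurable (cc Q s) := by
  unfold cc Matrix.mulVec dotProduct
  fun_prop

lemma law_cc {Ω : Type*} [MeasurableSpace Ω] (P : Measure Ω) [IsProbabilityMeasure P] {k : ℕ}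
    (Q : Matrix (Fin (k + 2)) (Fin (k + 2)) ℝ) (hQ : Q * Qᵀ = 1)
    (hl : ∀ l, Q (Fin.last (k + 1)) l = (Real.sqrt (k + 2))⁻¹) (σ ρ : ℝ) (hσ : 0 < σ)
    (hρ₂ : ρ < 1)
    (μ : Fin (k + 2) → ℝ) (Z : Ω → Fin (k + 2) → ℝ)
    (hgauss : IsGaussianVec P Z μ (σ ^ 2 • Ximat (k + 2) ρ))
    (hμ : (centerMat (k + 2)).mulVec μ ≠ 0)
    (h0 : ∀ l, Q 0 l = chi μ l) :
    AEMeasurable Z P ∧ P.map (fun ω => cc Q (σ * Real.sqrt (1 - ρ)) (Z ω)) =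
      gam k (euclNorm ((centerMat (k + 2)).mulVec μ) / (σ * Real.sqrt (1 - ρ))) := by
  obtain ⟨A, hA, hZ⟩ := hgauss
  set s := σ * Real.sqrt (1 - ρ) with hsdef
  have hs : 0 < s := mul_pos hσ (Real.sqrt_pos.2 (by linarith))
  have hs2 : s ^ 2 = σ ^ 2 * (1 - ρ) := by
    rw [hsdef, mul_pow, Real.sq_sqrt (by linarith)]
  have : IsProbabilityMeasure (stdGaussianPi (k + 2)) := by unfold stdGaussianPi; infer_instance
  have hm : Measurable (fun x : Fin (k + 2) → ℝ => μ + A.mulVec x) := by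
    unfold Matrix.mulVec dotProduct
    fun_prop
  have hae : AEMeasurable Z P := by
    by_contra hcon
    rw [Measure.map_of_not_aemeasurable hcon] at hZ
    have := Measure.isProbabilityMeasure_map (μ := stdGaussianPi (k + 2)) hm.aemeasurable
    rw [← hZ] at this
    exact this.ne_zero _ rfl
  refine ⟨hae, ?_⟩
  let L : Matrix (Fin (k + 1)) (Fin (k + 2)) ℝ := Matrix.of fun i l => (Q * A) i.castSucc l / s
  have hL : L * Lᵀ = 1 := by
    ext i j
    have e1 : (L * Lᵀ) i j = ((Q * A) * (Q * A)ᵀ) i.castSucc j.castSucc / s ^ 2 := by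
      rw [Matrix.mul_apply, Matrix.mul_apply, Finset.sum_div]
      refine Finset.sum_congr rfl fun l _ => ?_
      simp only [L, Matrix.of_apply, Matrix.transpose_apply]
      field_simp
    have e2 : (Q * A) * (Q * A)ᵀ = Q * (σ ^ 2 • Ximat (k + 2) ρ) * Qᵀ := by
      rw [← hA, Matrix.transpose_mul]; simp only [Matrix.mul_assoc]
    have e3 : σ ^ 2 • Ximat (k + 2) ρ = (s ^ 2) • (1 : Matrix (Fin (k + 2)) (Fin (k + 2)) ℝ) +
        (σ ^ 2 * ρ) • Matrix.of (fun _ _ => (1 : ℝ)) := by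
      ext a b
      simp only [Matrix.smul_apply, Matrix.add_apply, Ximat, Matrix.of_apply, Matrix.one_apply,
        smul_eq_mul, hs2]
      split_ifs <;> ring
    have e4 : (Q * (Matrix.of (fun _ _ => (1 : ℝ)) : Matrix (Fin (k + 2)) (Fin (k + 2)) ℝ) * Qᵀ) i.castSucc j.castSucc = 0 := by
      rw [Matrix.mul_apply]
      refine Finset.sum_eq_zero fun l _ => ?_
      rw [Matrix.mul_apply]
      simp only [Matrix.of_apply, mul_one]
      rw [row_sum Q hQ hl i, zero_mul]
    rw [e1, e2, e3, Matrix.mul_add, Matrix.add_mul, Matrix.add_apply]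
    simp only [Matrix.mul_smul, Matrix.smul_mul, Matrix.smul_apply, Matrix.mul_one, hQ, e4,
      smul_eq_mul, mul_zero, add_zero, Matrix.one_apply, Fin.castSucc_inj]
    field_simp
  have hmap : P.map (fun ω => cc Q s (Z ω)) = (P.map Z).map (cc Q s) :=
    (AEMeasurable.map_map_of_aemeasurable (cc_meas Q s).aemeasurable hae).symm
  have hLm : Measurable (fun v : Fin (k + 2) → ℝ => L.mulVec v) := by
    unfold Matrix.mulVec dotProduct
    fun_prop
  rw [hmap, hZ, Measure.map_map (cc_meas Q s) hm, ← law_shift, ← law_ortho L hL,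
    Measure.map_map (by fun_prop) hLm]
  congr 1
  funext v i
  have hc := congrFun (cc_mu Q hQ hl s μ hμ h0) i
  simp only [Function.comp_apply]
  rw [← hc]
  unfold cc
  rw [Matrix.mulVec_add, Pi.add_apply, add_div, Matrix.mulVec_mulVec]
  congr 1
  simp only [Matrix.mulVec, dotProduct, L, Matrix.of_apply]
  rw [Finset.sum_div]
  refine Finset.sum_congr rfl fun l _ => by ring

/-- in the homoscedastic world `θ* = χ(μ)` solves the
mean–variance optimization for every `λ ≥ 0`, with the stated optimal value. -/
theorem stmt19 {Ω : Type*} [MeasurableSpace Ω] (P : Measure Ω) [IsProbabilityMeasure P]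
    {n : ℕ} (hn : 3 ≤ n) (σ ρ : ℝ) (hσ : 0 < σ)
    (hρ₁ : -(1 / (n : ℝ)) < ρ) (hρ₂ : ρ < 1)
    (μ : Fin n → ℝ) (Z : Ω → Fin n → ℝ)
    (hgauss : IsGaussianVec P Z μ (σ ^ 2 • Ximat n ρ))
    (hPμ : (centerMat n).mulVec μ ≠ 0) :
    ∀ lam : ℝ, 0 ≤ lam →
      (euclNorm (chi μ) = 1 ∧ (∑ i, chi μ i) = 0) ∧
      ((∫ ω, chi μ ⬝ᵥ chi (Z ω) ∂P) -
          lam * variance (fun ω => chi μ ⬝ᵥ chi (Z ω)) P =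
        varrho (n - 1) (euclNorm ((centerMat n).mulVec μ) / (σ * Real.sqrt (1 - ρ))) -
          lam * fFun (n - 1)
            (euclNorm ((centerMat n).mulVec μ) / (σ * Real.sqrt (1 - ρ)))) ∧
      ∀ θ : Fin n → ℝ, euclNorm θ = 1 → (∑ i, θ i) = 0 →
        (∫ ω, θ ⬝ᵥ chi (Z ω) ∂P) - lam * variance (fun ω => θ ⬝ᵥ chi (Z ω)) P ≤
          varrho (n - 1) (euclNorm ((centerMat n).mulVec μ) / (σ * Real.sqrt (1 - ρ))) -
            lam * fFun (n - 1)
              (euclNorm ((centerMat n).mulVec μ) / (σ * Real.sqrt (1 - ρ))) := by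
  obtain ⟨k, rfl⟩ : ∃ k, n = k + 2 := ⟨n - 2, by omega⟩
  intro lam hlam
  obtain ⟨hc1, hc0⟩ := chi_props (by omega) μ hPμ
  obtain ⟨Q, hQ, h0, hl⟩ := exists_ortho k (chi μ) hc1 hc0
  obtain ⟨hae, hlaw⟩ := law_cc P Q hQ hl σ ρ hσ hρ₂ μ Z hgauss hPμ h0
  have hs : 0 < σ * Real.sqrt (1 - ρ) := mul_pos hσ (Real.sqrt_pos.2 (by linarith))
  have hk : k + 2 - 1 = k + 1 := by omega
  rw [hk]
  set s := σ * Real.sqrt (1 - ρ) with hsdef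
  set x := euclNorm ((centerMat (k + 2)).mulVec μ) / s with hx
  have hx0 : 0 ≤ x := div_nonneg (Real.sqrt_nonneg _) hs.le
  have hcae : AEMeasurable (fun ω => cc Q s (Z ω)) P := (cc_meas Q s).comp_aemeasurable hae
  have tr : ∀ θ : Fin (k + 2) → ℝ, (∑ i, θ i) = 0 →
      (∫ ω, θ ⬝ᵥ chi (Z ω) ∂P) - lam * variance (fun ω => θ ⬝ᵥ chi (Z ω)) P =
      ∫ y, TT (cc Q 1 θ) y ∂(gam k x) - lam * variance (TT (cc Q 1 θ)) (gam k x) := by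
    intro θ hθ
    have e : (fun ω => θ ⬝ᵥ chi (Z ω)) = (TT (cc Q 1 θ)) ∘ (fun ω => cc Q s (Z ω)) := by
      funext ω
      exact chi_TT Q hQ hl hs θ (Z ω) hθ
    rw [← hlaw, variance_map (TT_meas _).aemeasurable hcae,
      integral_map hcae (TT_meas _).aestronglyMeasurable, ← e]
    congr 1
    exact integral_congr_ae (Filter.Eventually.of_forall fun ω => congrFun e ω)
  refine ⟨⟨by rw [euclNorm, hc1, Real.sqrt_one], hc0⟩, ?_, ?_⟩
  · rw [tr _ hc0]
    refine TT_final_eq k x _ (cc_norm Q hQ hl _ hc0 hc1) ?_ lam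
    rw [cc, div_one, Fin.castSucc_zero, Matrix.mulVec, dotProduct, ← hc1]
    exact Finset.sum_congr rfl fun l _ => by rw [h0, sq]
  · intro θ hθ1 hθ0
    rw [tr _ hθ0]
    refine TT_final k hx0 _ (cc_norm Q hQ hl _ hθ0 ?_) hlam
    rw [← euclNorm_sq, hθ1, one_pow]
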